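/- arXiv:1803.09952 — 5 statements merged into one kernel-verified Lean document; each statement's English description precedes it below -/
import Mathlib

section
/- Let (S_1^*, S_2^*) be a feasible pair for the Semi-Restricted SSR instance (A,p) that minimizes MR(S_1,S_2,A) over all feasible pairs for (A,p), and suppose a_{max S_2^*} < Q. Then Σ_{i∈S_1^*} a_i ≤ Q and Σ_{j∈S_2^*} a_j < 2·Q. -/
open Finset

/-- Ratio of the sums of two index sets, with weights `f`. -/
noncomputable def ssrR (f : ℕ → ℝ) (S₁ S₂ : Finset ℕ) : ℝ :=
  (∑ i ∈ S₁, f i) / (∑ j ∈ S₂, f j)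

/-- Max ratio of the sums of two index sets, with weights `f`. -/
noncomputable def ssrMR (f : ℕ → ℝ) (S₁ S₂ : Finset ℕ) : ℝ :=
  max (ssrR f S₁ S₂) (ssrR f S₂ S₁)

/-- Feasibility for the Semi-Restricted SSR instance `(A, p)`:
`S₁, S₂ ⊆ {1,…,n}` are nonempty, disjoint, `max S₁ = p` and `max S₂ > p`. -/
def SemiFeasible (n p : ℕ) (S₁ S₂ : Finset ℕ) : Prop :=
  S₁ ⊆ Finset.Icc 1 n ∧ S₂ ⊆ Finset.Icc 1 n ∧ S₁.Nonempty ∧ S₂.Nonempty ∧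
    Disjoint S₁ S₂ ∧ S₁.max = (p : WithBot ℕ) ∧ (p : WithBot ℕ) < S₂.max

/-! Deleting an index from `S₂` while keeping one above `p` preserves feasibility. If the remaining
sum were at least `∑ S₁`, the max ratio would be that sum over `∑ S₁` and the deletion would have
strictly decreased it. Hence, at an optimum, deleting an index leaves less than `∑ S₁ ≤ Q`, and the
deleted weight is itself at most `Q`. If no index can be deleted, `∑ S₂` is a single weight. -/

theorem ssrMR_eq_div_of_sum_le {f : ℕ → ℝ} {S T : Finset ℕ} (hS : 0 < ∑ i ∈ S, f i)
    (hST : ∑ i ∈ S, f i ≤ ∑ j ∈ T, f j) :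
    ssrMR f S T = (∑ j ∈ T, f j) / ∑ i ∈ S, f i :=
  max_eq_right <| calc
    ssrR f S T ≤ 1 := (div_le_one₀ (hS.trans_le hST)).2 hST
    _ ≤ ssrR f T S := (one_le_div₀ hS).2 hST

theorem ssrMR_lt_ssrMR_of_sum_lt {f : ℕ → ℝ} {S T U : Finset ℕ} (hS : 0 < ∑ i ∈ S, f i)
    (hST : ∑ i ∈ S, f i ≤ ∑ j ∈ T, f j) (hTU : ∑ j ∈ T, f j < ∑ j ∈ U, f j) :
    ssrMR f S T < ssrMR f S U := by
  rw [ssrMR_eq_div_of_sum_le hS hST, ssrMR_eq_div_of_sum_le hS (hST.trans hTU.le)]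
  exact div_lt_div_of_pos_right hTU hS

namespace SemiFeasible

variable {n p : ℕ} {S₁ S₂ : Finset ℕ}

theorem right_subset (h : SemiFeasible n p S₁ S₂) : S₂ ⊆ Icc 1 n :=
  h.2.1

theorem left_subset_Icc (h : SemiFeasible n p S₁ S₂) : S₁ ⊆ Icc 1 p := by
  obtain ⟨hS₁, -, -, -, -, hmax, -⟩ := h
  exact fun i hi => mem_Icc.2 ⟨(mem_Icc.1 (hS₁ hi)).1, le_max_of_eq hi hmax⟩

theorem le (h : SemiFeasible n p S₁ S₂) : p ≤ n := by
  obtain ⟨hS₁, -, -, -, -, hmax, -⟩ := h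
  exact (mem_Icc.1 (hS₁ (mem_of_max hmax))).2

theorem exists_mem_right_gt (h : SemiFeasible n p S₁ S₂) : ∃ j ∈ S₂, p < j := by
  obtain ⟨-, -, -, hne, -, -, hmax⟩ := h
  rw [← coe_max' hne] at hmax
  exact ⟨S₂.max' hne, S₂.max'_mem hne, WithBot.coe_lt_coe.1 hmax⟩

theorem of_right_subset (h : SemiFeasible n p S₁ S₂) {T : Finset ℕ} (hT : T ⊆ S₂) {j : ℕ}
    (hj : j ∈ T) (hpj : p < j) : SemiFeasible n p S₁ T := by
  obtain ⟨hS₁, hS₂, hne, -, hdisj, hmax, -⟩ := h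
  exact ⟨hS₁, hT.trans hS₂, hne, ⟨j, hj⟩, hdisj.mono_right hT, hmax,
    (WithBot.coe_lt_coe.2 hpj).trans_le (le_max hj)⟩

variable {f : ℕ → ℝ}

theorem sum_left_pos (h : SemiFeasible n p S₁ S₂) (hf : ∀ i ∈ Icc 1 n, 0 < f i) :
    0 < ∑ i ∈ S₁, f i := by
  obtain ⟨hS₁, -, hne, -⟩ := h
  exact sum_pos (fun i hi => hf i (hS₁ hi)) hne

theorem sum_left_le (h : SemiFeasible n p S₁ S₂) (hf : ∀ i ∈ Icc 1 p, 0 ≤ f i) :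
    ∑ i ∈ S₁, f i ≤ ∑ i ∈ Icc 1 p, f i :=
  sum_le_sum_of_subset_of_nonneg h.left_subset_Icc fun i hi _ => hf i hi

theorem sum_lt_sum_left_of_ssubset_of_optimal (h : SemiFeasible n p S₁ S₂)
    (hf : ∀ i ∈ Icc 1 n, 0 < f i)
    (hopt : ∀ T : Finset ℕ, SemiFeasible n p S₁ T → ssrMR f S₁ S₂ ≤ ssrMR f S₁ T)
    {T : Finset ℕ} (hT : T ⊂ S₂) {j : ℕ} (hj : j ∈ T) (hpj : p < j) :
    ∑ i ∈ T, f i < ∑ i ∈ S₁, f i := by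
  have hpos : ∀ i ∈ S₂, 0 < f i := fun i hi => hf i (h.right_subset hi)
  obtain ⟨k, hkS₂, hkT⟩ := exists_of_ssubset hT
  have hlt : ∑ i ∈ T, f i < ∑ i ∈ S₂, f i :=
    sum_lt_sum_of_subset hT.subset hkS₂ hkT (hpos k hkS₂) fun i hi _ => (hpos i hi).le
  by_contra! hle
  exact (hopt T (h.of_right_subset hT.subset hj hpj)).not_gt
    (ssrMR_lt_ssrMR_of_sum_lt (h.sum_left_pos hf) hle hlt)

theorem sum_right_lt_sum_left_add_of_optimal (h : SemiFeasible n p S₁ S₂)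
    (hf : ∀ i ∈ Icc 1 n, 0 < f i)
    (hopt : ∀ T : Finset ℕ, SemiFeasible n p S₁ T → ssrMR f S₁ S₂ ≤ ssrMR f S₁ T)
    {c : ℝ} (hc : ∀ j ∈ S₂, f j ≤ c) :
    ∑ j ∈ S₂, f j < ∑ i ∈ S₁, f i + c := by
  obtain ⟨j, hj, hpj⟩ := h.exists_mem_right_gt
  obtain rfl | hnontriv := eq_singleton_or_nontrivial hj
  · rw [sum_singleton]
    exact (hc j hj).trans_lt (lt_add_of_pos_left c (h.sum_left_pos hf))
  · obtain ⟨k, hk, hkj⟩ := hnontriv.exists_ne j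
    calc ∑ i ∈ S₂, f i = ∑ i ∈ S₂.erase k, f i + f k := (sum_erase_add S₂ f hk).symm
      _ < ∑ i ∈ S₁, f i + c :=
        add_lt_add_of_lt_of_le (h.sum_lt_sum_left_of_ssubset_of_optimal hf hopt
          (erase_ssubset hk) (mem_erase.2 ⟨hkj.symm, hj⟩) hpj) (hc k hk)

end SemiFeasible

theorem stmt0_general (n p : ℕ) (f : ℕ → ℝ) (hpos : ∀ i ∈ Icc 1 n, 0 < f i)
    (Q : ℝ) (hQ : Q = ∑ i ∈ Icc 1 p, f i) (S₁ S₂ : Finset ℕ) (hfeas : SemiFeasible n p S₁ S₂)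
    (hopt : ∀ T : Finset ℕ, SemiFeasible n p S₁ T → ssrMR f S₁ S₂ ≤ ssrMR f S₁ T)
    (hval : ∀ j ∈ S₂, f j ≤ Q) :
    (∑ i ∈ S₁, f i ≤ Q) ∧ (∑ j ∈ S₂, f j < 2 * Q) := by
  have hS₁ : ∑ i ∈ S₁, f i ≤ Q := hQ ▸ hfeas.sum_left_le fun i hi =>
    (hpos i (Icc_subset_Icc_right hfeas.le hi)).le
  have hS₂ : ∑ j ∈ S₂, f j < ∑ i ∈ S₁, f i + Q :=
    hfeas.sum_right_lt_sum_left_add_of_optimal hpos hopt hval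
  exact ⟨hS₁, by linarith⟩

/-- an optimal feasible pair `(S₁*, S₂*)` for the Semi-Restricted SSR
instance `(A, p)` with `a_{max S₂*} < Q` satisfies `∑_{S₁*} a ≤ Q` and `∑_{S₂*} a < 2Q`. -/
theorem stmt0 (n p : ℕ) (a : ℕ → ℕ)
    (hpos : ∀ i ∈ Finset.Icc 1 n, 0 < a i)
    (hmono : StrictMonoOn a (Finset.Icc 1 n))
    (hp1 : 1 ≤ p) (hpn : p < n)
    (Q : ℕ) (hQ : Q = ∑ i ∈ Finset.Icc 1 p, a i)
    (S₁ S₂ : Finset ℕ) (hne₂ : S₂.Nonempty)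
    (hfeas : SemiFeasible n p S₁ S₂)
    (hopt : ∀ T₁ T₂ : Finset ℕ, SemiFeasible n p T₁ T₂ →
      ssrMR (fun i => (a i : ℝ)) S₁ S₂ ≤ ssrMR (fun i => (a i : ℝ)) T₁ T₂)
    (hval : a (S₂.max' hne₂) < Q) :
    (∑ i ∈ S₁, a i ≤ Q) ∧ (∑ j ∈ S₂, a j < 2 * Q) := by
  have hle : ∀ j ∈ S₂, a j ≤ Q := fun j hj => (hmono.monotoneOn (mod_cast hfeas.right_subset hj)
    (mod_cast hfeas.right_subset (S₂.max'_mem hne₂)) (S₂.le_max' j hj)).trans hval.le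
  exact_mod_cast stmt0_general n p (fun i => (a i : ℝ)) (mod_cast hpos) Q (mod_cast hQ) S₁ S₂ hfeas
    (hopt S₁) (mod_cast hle)
end

section
/- Suppose the set C = {i ∈ {1,…,n} : a_i ≥ Q} is nonempty and let q_0 = min C. Then for every feasible pair (S_1,S_2) for the Semi-Restricted SSR instance (A,p) with a_{max S_2} ≥ Q, one has MR({1,…,p}, {q_0}, A) ≤ MR(S_1, S_2, A). In other words, the pair ({1,…,p}, {q_0}) is optimal among all feasible pairs whose larger-indexed set has maximum element of value at least Q. -/
open Finset

/-!
Since `∑ S₁ ≤ Q ≤ a q₀ ≤ a (max S₂) ≤ ∑ S₂`, for both pairs the larger of the two ratios is the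
sum of the second set over that of the first. Replacing `S₁` by `{1, …, p}` raises the denominator
to `Q`, and replacing `S₂` by `{q₀}` lowers the numerator to `a q₀`.
-/

theorem ssrMR_eq_ssrR_swap {f : ℕ → ℝ} {S T : Finset ℕ} (hpos : 0 < ∑ i ∈ S, f i)
    (hle : ∑ i ∈ S, f i ≤ ∑ i ∈ T, f i) : ssrMR f S T = ssrR f T S :=
  max_eq_right <| ((div_le_one (hpos.trans_le hle)).2 hle).trans ((one_le_div hpos).2 hle)

theorem ssrMR_le_ssrMR_of_sum_le {f : ℕ → ℝ} {S₁ S₂ T₁ T₂ : Finset ℕ}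
    (hpos : 0 < ∑ i ∈ S₁, f i) (h₁ : ∑ i ∈ S₁, f i ≤ ∑ i ∈ T₁, f i)
    (hT : ∑ i ∈ T₁, f i ≤ ∑ i ∈ T₂, f i) (h₂ : ∑ i ∈ T₂, f i ≤ ∑ i ∈ S₂, f i) :
    ssrMR f T₁ T₂ ≤ ssrMR f S₁ S₂ := by
  have hT₁ : 0 < ∑ i ∈ T₁, f i := hpos.trans_le h₁
  rw [ssrMR_eq_ssrR_swap hT₁ hT, ssrMR_eq_ssrR_swap hpos ((h₁.trans hT).trans h₂)]
  exact div_le_div₀ ((hT₁.le.trans hT).trans h₂) h₂ hpos h₁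

theorem ssrMR_singleton_le_ssrMR {f : ℕ → ℝ} {S₁ S₂ T : Finset ℕ} {q j : ℕ}
    (hT : ∀ i ∈ T, 0 < f i) (hS₁ : S₁ ⊆ T) (hne : S₁.Nonempty) (hS₂ : ∀ i ∈ S₂, 0 ≤ f i)
    (hj : j ∈ S₂) (hTq : ∑ i ∈ T, f i ≤ f q) (hqj : f q ≤ f j) :
    ssrMR f T {q} ≤ ssrMR f S₁ S₂ := by
  apply ssrMR_le_ssrMR_of_sum_le
  · exact sum_pos (fun i hi => hT i (hS₁ hi)) hne
  · exact sum_le_sum_of_subset_of_nonneg hS₁ fun i hi _ => (hT i hi).le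
  · rwa [sum_singleton]
  · rw [sum_singleton]
    exact hqj.trans (single_le_sum hS₂ hj)

theorem SemiFeasible.left_subset_Icc_s2 {n p : ℕ} {S₁ S₂ : Finset ℕ} (h : SemiFeasible n p S₁ S₂) :
    S₁ ⊆ Icc 1 p := by
  obtain ⟨hS₁, -, -, -, -, hmax, -⟩ := h
  exact fun i hi => mem_Icc.2 ⟨(mem_Icc.1 (hS₁ hi)).1, le_max_of_eq hi hmax⟩

theorem stmt2_general {n p : ℕ} {f : ℕ → ℝ} (hpos : ∀ i ∈ Icc 1 n, 0 < f i)
    (hmono : MonotoneOn f (Icc 1 n)) (hpn : p ≤ n) {q₀ : ℕ}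
    (hq₀ : IsLeast {i | i ∈ Icc 1 n ∧ ∑ k ∈ Icc 1 p, f k ≤ f i} q₀)
    {S₁ S₂ : Finset ℕ} (hS₁ : S₁ ⊆ Icc 1 p) (hne : S₁.Nonempty) (hS₂ : S₂ ⊆ Icc 1 n)
    {j : ℕ} (hj : j ∈ S₂) (hQj : ∑ k ∈ Icc 1 p, f k ≤ f j) :
    ssrMR f (Icc 1 p) {q₀} ≤ ssrMR f S₁ S₂ := by
  obtain ⟨⟨hq₀n, hQq₀⟩, hleast⟩ := hq₀
  have hq₀j : f q₀ ≤ f j := hmono hq₀n (hS₂ hj) (hleast ⟨hS₂ hj, hQj⟩)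
  exact ssrMR_singleton_le_ssrMR (fun i hi => hpos i (Icc_subset_Icc_right hpn hi)) hS₁ hne
    (fun i hi => (hpos i (hS₂ hi)).le) hj hQq₀ hq₀j

/-- if `C = {i : a_i ≥ Q}` is nonempty with minimum `q₀`, then the pair
`({1,…,p}, {q₀})` is optimal among all feasible pairs `(S₁, S₂)` for `(A, p)` whose
larger-indexed set has maximum element of value at least `Q`. -/
theorem stmt2 (n p : ℕ) (a : ℕ → ℕ)
    (hpos : ∀ i ∈ Finset.Icc 1 n, 0 < a i)
    (hmono : StrictMonoOn a (Finset.Icc 1 n))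
    (hp1 : 1 ≤ p) (hpn : p < n)
    (Q : ℕ) (hQ : Q = ∑ i ∈ Finset.Icc 1 p, a i)
    (C : Finset ℕ) (hCdef : C = (Finset.Icc 1 n).filter (fun i => Q ≤ a i))
    (hC : C.Nonempty)
    (q₀ : ℕ) (hq₀ : q₀ = C.min' hC) :
    ∀ S₁ S₂ : Finset ℕ, ∀ hne₂ : S₂.Nonempty, SemiFeasible n p S₁ S₂ →
      Q ≤ a (S₂.max' hne₂) →
      ssrMR (fun i => (a i : ℝ)) (Finset.Icc 1 p) {q₀} ≤
        ssrMR (fun i => (a i : ℝ)) S₁ S₂ := by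
  intro S₁ S₂ hne₂ hf hQm
  subst hQ hCdef hq₀
  exact stmt2_general (f := fun i => (a i : ℝ)) (mod_cast hpos)
    (Nat.mono_cast.comp_monotoneOn hmono.monotoneOn) hpn.le
    (by simpa only [coe_filter, ← Nat.cast_sum, Nat.cast_le] using isLeast_min' _ hC)
    hf.left_subset_Icc_s2 hf.2.2.1 hf.2.1 (S₂.max'_mem hne₂) (mod_cast hQm)
end

section
/- Fix an integer d and let F_d be the collection of feasible pairs (S_1,S_2) for the Semi-Restricted SSR instance (A,p) with Σ_{i∈S_1} a_i − Σ_{j∈S_2} a_j = d. If (S_1',S_2') ∈ F_d maximizes the total sum Σ_{i∈S_1} a_i + Σ_{j∈S_2} a_j over F_d, then MR(S_1',S_2',A) ≤ MR(S_1,S_2,A) for every (S_1,S_2) ∈ F_d. -/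
open Finset

/-! For positive sums `x` and `y` the max ratio equals `1 + |x - y| / min x y`. Once the difference
is fixed, a larger total means that both sums, hence their minimum, are larger, so the max ratio
is smaller. -/

section OrderedField

variable {K : Type*} [Field K] [LinearOrder K] [IsStrictOrderedRing K] {x y x' y' : K}

theorem max_div_div_swap_eq_one_add_abs_sub_div_min (hx : 0 < x) (hy : 0 < y) :
    max (x / y) (y / x) = 1 + |x - y| / min x y := by
  wlog h : y ≤ x generalizing x y
  · rw [max_comm, abs_sub_comm, min_comm]
    exact this hy hx (le_of_not_ge h)
  have hratio : y / x ≤ x / y := ((div_le_one hx).2 h).trans ((one_le_div hy).2 h)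
  rw [max_eq_left hratio, min_eq_right h, abs_of_nonneg (sub_nonneg.2 h), sub_div,
    div_self hy.ne', add_sub_cancel]

theorem max_div_div_swap_le_of_sub_eq_sub (hx : 0 < x) (hy : 0 < y) (hxx' : x ≤ x')
    (hsub : x' - y' = x - y) : max (x' / y') (y' / x') ≤ max (x / y) (y / x) := by
  have hyy' : y ≤ y' := by linarith
  rw [max_div_div_swap_eq_one_add_abs_sub_div_min (hx.trans_le hxx') (hy.trans_le hyy'),
    max_div_div_swap_eq_one_add_abs_sub_div_min hx hy, hsub]
  gcongr

end OrderedField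

theorem SemiFeasible.sum_pos {M : Type*} [AddCommMonoid M] [PartialOrder M]
    [IsOrderedCancelAddMonoid M] {n p : ℕ} {S₁ S₂ : Finset ℕ} {f : ℕ → M}
    (h : SemiFeasible n p S₁ S₂) (hf : ∀ i ∈ Icc 1 n, 0 < f i) :
    0 < ∑ i ∈ S₁, f i ∧ 0 < ∑ j ∈ S₂, f j := by
  obtain ⟨hS₁, hS₂, hne₁, hne₂, -⟩ := h
  exact ⟨Finset.sum_pos (fun i hi ↦ hf i (hS₁ hi)) hne₁,
    Finset.sum_pos (fun j hj ↦ hf j (hS₂ hj)) hne₂⟩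

theorem stmt6_general {f : ℕ → ℝ} {S₁ S₂ S₁' S₂' : Finset ℕ}
    (hpos : 0 < ∑ i ∈ S₁, f i ∧ 0 < ∑ j ∈ S₂, f j)
    (hdiff : ∑ i ∈ S₁', f i - ∑ j ∈ S₂', f j = ∑ i ∈ S₁, f i - ∑ j ∈ S₂, f j)
    (htotal : ∑ i ∈ S₁, f i + ∑ j ∈ S₂, f j ≤ ∑ i ∈ S₁', f i + ∑ j ∈ S₂', f j) :
    ssrMR f S₁' S₂' ≤ ssrMR f S₁ S₂ := by
  have hsum₁ : ∑ i ∈ S₁, f i ≤ ∑ i ∈ S₁', f i := by linarith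
  exact max_div_div_swap_le_of_sub_eq_sub hpos.1 hpos.2 hsum₁ hdiff

/-- fix `d`; among feasible pairs for `(A, p)` whose difference of sums
equals `d`, any pair maximizing the total sum minimizes the max ratio. -/
theorem stmt6 (n p : ℕ) (a : ℕ → ℕ)
    (hpos : ∀ i ∈ Finset.Icc 1 n, 0 < a i)
    (hmono : StrictMonoOn a (Finset.Icc 1 n))
    (hp1 : 1 ≤ p) (hpn : p < n)
    (d : ℤ)
    (S₁' S₂' : Finset ℕ)
    (hfeas' : SemiFeasible n p S₁' S₂')
    (hdiff' : (∑ i ∈ S₁', (a i : ℤ)) - ∑ j ∈ S₂', (a j : ℤ) = d)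
    (hmaxtotal : ∀ S₁ S₂ : Finset ℕ, SemiFeasible n p S₁ S₂ →
      (∑ i ∈ S₁, (a i : ℤ)) - ∑ j ∈ S₂, (a j : ℤ) = d →
      (∑ i ∈ S₁, a i) + ∑ j ∈ S₂, a j ≤ (∑ i ∈ S₁', a i) + ∑ j ∈ S₂', a j) :
    ∀ S₁ S₂ : Finset ℕ, SemiFeasible n p S₁ S₂ →
      (∑ i ∈ S₁, (a i : ℤ)) - ∑ j ∈ S₂, (a j : ℤ) = d →
      ssrMR (fun i => (a i : ℝ)) S₁' S₂' ≤ ssrMR (fun i => (a i : ℝ)) S₁ S₂ := by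
  intro S₁ S₂ hfeas hdiff
  exact stmt6_general (hfeas.sum_pos fun i hi ↦ Nat.cast_pos.2 (hpos i hi))
    (by exact_mod_cast hdiff'.trans hdiff.symm)
    (by exact_mod_cast hmaxtotal S₁ S₂ hfeas hdiff)
end

section
/- Let ε ∈ (0,1), p ∈ {1,…,n−1}, δ = ε·a_p/(3n), and a'_i = ⌊a_i/δ⌋ for each i. Then for any nonempty disjoint index sets S_A, S_B ⊆ {1,…,n} with max S_A ≥ p and max S_B ≥ p: MR(S_A, S_B, A) ≤ MR(S_A, S_B, A') + ε/3, where ratios with respect to A' are computed using the values a'_i in place of a_i. -/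
open Finset

/-
Rounding costs a numerator `∑_S a` at most `|S| * δ ≤ n * δ = ε * a_p / 3`, and a denominator can
only shrink when `a` is replaced by `δ * a'`. Each ratio therefore drops by at most
`|S| * δ / ∑_T a ≤ ε / 3`, since `max T ≥ p` forces `∑_T a ≥ a_p`; it also gives `∑_T a' ≥ 1`, so
that the scaled ratio is a genuine quotient.
-/

lemma exists_mem_le_of_monotoneOn_of_le_max' {α β : Type*} [LinearOrder α] [Preorder β] {f : α → β}
    {s t : Finset α} {p : α} (hf : MonotoneOn f t) (hp : p ∈ t) (hst : s ⊆ t) (hs : s.Nonempty)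
    (hps : p ≤ s.max' hs) : ∃ i ∈ s, f p ≤ f i :=
  ⟨s.max' hs, s.max'_mem hs, hf hp (hst (s.max'_mem hs)) hps⟩

section FloorDiv

variable {ι K : Type*} [Field K] [LinearOrder K] [IsStrictOrderedRing K]

lemma div_le_div_add_div_of_le_mul_add {x x' y y' δ e : K} (hδ : 0 < δ) (hx' : 0 ≤ x')
    (hy' : 0 < y') (hx : x ≤ δ * x' + e) (hy : δ * y' ≤ y) : x / y ≤ x' / y' + e / y := by
  have hδy' : 0 < δ * y' := mul_pos hδ hy'
  have hy0 : 0 < y := hδy'.trans_le hy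
  calc x / y ≤ (δ * x' + e) / y := by gcongr
    _ = δ * x' / y + e / y := add_div ..
    _ ≤ δ * x' / (δ * y') + e / y := by gcongr
    _ = x' / y' + e / y := by rw [mul_div_mul_left _ _ hδ.ne']

variable [FloorRing K] {δ : K}

lemma mul_sum_floor_div_le (hδ : 0 < δ) (a : ι → K) (s : Finset ι) :
    δ * ∑ i ∈ s, (⌊a i / δ⌋ : K) ≤ ∑ i ∈ s, a i := by
  rw [mul_sum]
  refine sum_le_sum fun i _ ↦ ?_
  linarith [Int.sub_floor_div_mul_nonneg (a i) hδ]

lemma sum_le_mul_sum_floor_div_add (hδ : 0 < δ) (a : ι → K) (s : Finset ι) :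
    ∑ i ∈ s, a i ≤ δ * ∑ i ∈ s, (⌊a i / δ⌋ : K) + #s * δ := by
  rw [mul_sum, ← nsmul_eq_mul, ← sum_const, ← sum_add_distrib]
  refine sum_le_sum fun i _ ↦ ?_
  linarith [Int.sub_floor_div_mul_lt (a i) hδ]

lemma cast_floor_div_nonneg {x : K} (hδ : 0 < δ) (hx : 0 ≤ x) : (0 : K) ≤ ⌊x / δ⌋ :=
  Int.cast_nonneg (Int.floor_nonneg.2 (div_nonneg hx hδ.le))

lemma sum_floor_div_pos {a : ι → K} {s : Finset ι} (hδ : 0 < δ) (ha : ∀ i ∈ s, 0 ≤ a i)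
    (hs : ∃ i ∈ s, δ ≤ a i) :
    0 < ∑ i ∈ s, (⌊a i / δ⌋ : K) := by
  obtain ⟨j, hj, hδj⟩ := hs
  refine sum_pos' (fun i hi ↦ cast_floor_div_nonneg hδ (ha i hi)) ⟨j, hj, ?_⟩
  exact Int.cast_pos.2 (Int.floor_pos.2 ((one_le_div hδ).2 hδj))

end FloorDiv

section MaxRatio

variable {a f g : ℕ → ℝ} {S T : Finset ℕ} {c δ η : ℝ}

lemma ssrMR_le_ssrMR_add (hST : ssrR f S T ≤ ssrR g S T + η)
    (hTS : ssrR f T S ≤ ssrR g T S + η) : ssrMR f S T ≤ ssrMR g S T + η :=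
  (max_le_max hST hTS).trans_eq (max_add_add_right _ _ _)

lemma ssrR_le_ssrR_floor_div_add_card_mul_div (hδ : 0 < δ) (hS : ∀ i ∈ S, 0 ≤ a i)
    (hT : ∀ i ∈ T, 0 ≤ a i) (hδT : ∃ i ∈ T, δ ≤ a i) :
    ssrR a S T ≤ ssrR (fun i ↦ ⌊a i / δ⌋) S T + #S * δ / ∑ i ∈ T, a i :=
  div_le_div_add_div_of_le_mul_add hδ
    (sum_nonneg fun i hi ↦ cast_floor_div_nonneg hδ (hS i hi))
    (sum_floor_div_pos hδ hT hδT) (sum_le_mul_sum_floor_div_add hδ a S)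
    (mul_sum_floor_div_le hδ a T)

lemma ssrR_le_ssrR_floor_div_add (hδ : 0 < δ) (hδc : δ ≤ c) (hS : ∀ i ∈ S, 0 ≤ a i)
    (hT : ∀ i ∈ T, 0 ≤ a i) (hcT : ∃ i ∈ T, c ≤ a i) (hη : #S * δ ≤ η * c) :
    ssrR a S T ≤ ssrR (fun i ↦ ⌊a i / δ⌋) S T + η := by
  obtain ⟨j, hj, hcj⟩ := hcT
  have hc : 0 < c := hδ.trans_le hδc
  have hcsum : c ≤ ∑ i ∈ T, a i := hcj.trans (single_le_sum hT hj)
  calc ssrR a S T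
    _ ≤ ssrR (fun i ↦ ⌊a i / δ⌋) S T + #S * δ / ∑ i ∈ T, a i :=
      ssrR_le_ssrR_floor_div_add_card_mul_div hδ hS hT ⟨j, hj, hδc.trans hcj⟩
    _ ≤ ssrR (fun i ↦ ⌊a i / δ⌋) S T + #S * δ / c := by gcongr
    _ ≤ ssrR (fun i ↦ ⌊a i / δ⌋) S T + η := by gcongr; exact (div_le_iff₀ hc).2 hη

end MaxRatio

theorem stmt9_general (n : ℕ) (a : ℕ → ℝ)
    (hpos : ∀ i ∈ Icc 1 n, 0 < a i)
    (hmono : MonotoneOn a (Icc 1 n))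
    (ε : ℝ) (hε0 : 0 < ε) (hεn : ε ≤ 3 * n)
    (p : ℕ) (hp : p ∈ Icc 1 n)
    (δ : ℝ) (hδ : δ = ε * a p / (3 * n))
    (a' : ℕ → ℤ) (ha' : ∀ i, a' i = ⌊a i / δ⌋)
    (SA SB : Finset ℕ)
    (hsubA : SA ⊆ Icc 1 n) (hsubB : SB ⊆ Icc 1 n)
    (hneA : SA.Nonempty) (hneB : SB.Nonempty)
    (hmaxA : p ≤ SA.max' hneA) (hmaxB : p ≤ SB.max' hneB) :
    ssrMR a SA SB ≤ ssrMR (fun i ↦ (a' i : ℝ)) SA SB + ε / 3 := by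
  obtain rfl : a' = fun i ↦ ⌊a i / δ⌋ := funext ha'
  have hap : 0 < a p := hpos p hp
  have hn : (0 : ℝ) < n := pos_of_mul_pos_right (hε0.trans_le hεn) zero_le_three
  have hδ0 : 0 < δ := hδ ▸ by positivity
  have hδap : δ ≤ a p := by
    rw [hδ, mul_div_right_comm]
    exact mul_le_of_le_one_left hap.le ((div_le_one (by positivity)).2 hεn)
  have hnδ : n * δ = ε / 3 * a p := by rw [hδ]; field_simp
  have ratio_bound {S T : Finset ℕ} (hS : S ⊆ Icc 1 n) (hT : T ⊆ Icc 1 n)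
      (hne : T.Nonempty) (hmax : p ≤ T.max' hne) :
      ssrR a S T ≤ ssrR (fun i ↦ ⌊a i / δ⌋) S T + ε / 3 := by
    have hcard : #S ≤ n := by simpa using card_le_card hS
    refine ssrR_le_ssrR_floor_div_add hδ0 hδap (fun i hi ↦ (hpos i (hS hi)).le)
      (fun i hi ↦ (hpos i (hT hi)).le) ?_ ?_
    · exact exists_mem_le_of_monotoneOn_of_le_max' hmono hp hT hne hmax
    · rw [← hnδ]
      gcongr
  exact ssrMR_le_ssrMR_add (ratio_bound hsubA hsubB hneB hmaxB) (ratio_bound hsubB hsubA hneA hmaxA)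

/-- with `δ = ε·a_p/(3n)` and scaled values `a'_i = ⌊a_i/δ⌋`, for nonempty
disjoint `S_A, S_B ⊆ {1,…,n}` with `max S_A ≥ p` and `max S_B ≥ p`:
`MR(S_A, S_B, A) ≤ MR(S_A, S_B, A') + ε/3`. -/
theorem stmt9 (n : ℕ) (a : ℕ → ℕ)
    (hpos : ∀ i ∈ Finset.Icc 1 n, 0 < a i)
    (hmono : StrictMonoOn a (Finset.Icc 1 n))
    (ε : ℝ) (hε0 : 0 < ε) (hε1 : ε < 1)
    (p : ℕ) (hp1 : 1 ≤ p) (hpn : p < n)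
    (δ : ℝ) (hδ : δ = ε * (a p : ℝ) / (3 * n))
    (a' : ℕ → ℤ) (ha' : ∀ i, a' i = ⌊(a i : ℝ) / δ⌋)
    (SA SB : Finset ℕ)
    (hsubA : SA ⊆ Finset.Icc 1 n) (hsubB : SB ⊆ Finset.Icc 1 n)
    (hneA : SA.Nonempty) (hneB : SB.Nonempty) (hdisj : Disjoint SA SB)
    (hmaxA : p ≤ SA.max' hneA) (hmaxB : p ≤ SB.max' hneB) :
    ssrMR (fun i => (a i : ℝ)) SA SB ≤ ssrMR (fun i => (a' i : ℝ)) SA SB + ε / 3 := by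
  have hn : (1 : ℝ) ≤ n := mod_cast hp1.trans hpn.le
  exact stmt9_general n (fun i ↦ a i) (fun i hi ↦ mod_cast hpos i hi)
    (Nat.mono_cast.comp_monotoneOn hmono.monotoneOn) ε hε0 (by linarith) p
    (mem_Icc.2 ⟨hp1, hpn.le⟩) δ hδ a' ha' SA SB hsubA hsubB hneA hneB hmaxA hmaxB
end

section
/- Let ε ∈ (0,1), p ∈ {1,…,n−1}, δ = ε·a_p/(3n), and a'_i = ⌊a_i/δ⌋ for each i. Then for any nonempty disjoint index sets S_1^*, S_2^* ⊆ {1,…,n} with max S_1^* ≥ p and max S_2^* ≥ p: MR(S_1^*, S_2^*, A') ≤ (1 + ε/2)·MR(S_1^*, S_2^*, A), where ratios with respect to A' are computed using the values a'_i in place of a_i. -/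
open Finset

/-!
Dividing by `δ` and rounding down leaves `δ` times a sum at most the original sum, and loses at
most `δ` per term. With `δ = ε w / (3 n)`, a sum of at most `n` terms that is at least `w` keeps a
fraction `1 - ε / 3` of its value. Hence a ratio of two such sums grows by a factor of at most
`(1 - ε / 3)⁻¹`, which is at most `1 + ε / 2` when `ε ≤ 1`.
-/

section Rounding

variable {ι K : Type*} [Field K] [LinearOrder K] [IsStrictOrderedRing K] [FloorRing K]
  {δ η : K}

theorem mul_sum_floor_div_le_sum (hδ : 0 < δ) (a : ι → K) (S : Finset ι) :
    δ * ∑ i ∈ S, (⌊a i / δ⌋ : K) ≤ ∑ i ∈ S, a i := by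
  rw [mul_sum]
  refine sum_le_sum fun i _ => ?_
  rw [mul_comm]
  exact sub_nonneg.1 (Int.sub_floor_div_mul_nonneg (a i) hδ)

theorem sum_le_mul_sum_floor_div_add_card_mul (hδ : 0 < δ) (a : ι → K) (S : Finset ι) :
    ∑ i ∈ S, a i ≤ δ * ∑ i ∈ S, (⌊a i / δ⌋ : K) + #S * δ := by
  calc ∑ i ∈ S, a i ≤ ∑ i ∈ S, (δ * (⌊a i / δ⌋ : K) + δ) :=
        sum_le_sum fun i _ => by linarith [Int.sub_floor_div_mul_lt (a i) hδ]
    _ = δ * ∑ i ∈ S, (⌊a i / δ⌋ : K) + #S * δ := by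
        rw [sum_add_distrib, ← mul_sum, sum_const, nsmul_eq_mul]

variable {a : ι → K} {S T : Finset ι}

theorem one_sub_mul_sum_le_mul_sum_floor_div (hδ : 0 < δ)
    (hcard : #S * δ ≤ η * ∑ i ∈ S, a i) :
    (1 - η) * ∑ i ∈ S, a i ≤ δ * ∑ i ∈ S, (⌊a i / δ⌋ : K) := by
  linarith [sum_le_mul_sum_floor_div_add_card_mul hδ a S]

theorem sum_floor_div_div_sum_floor_div_le (hδ : 0 < δ) (hη : η < 1)
    (hS : 0 ≤ ∑ i ∈ S, a i) (hT : 0 < ∑ i ∈ T, a i) (hcard : #T * δ ≤ η * ∑ i ∈ T, a i) :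
    (∑ i ∈ S, (⌊a i / δ⌋ : K)) / ∑ i ∈ T, (⌊a i / δ⌋ : K) ≤
      (1 - η)⁻¹ * ((∑ i ∈ S, a i) / ∑ i ∈ T, a i) := by
  calc (∑ i ∈ S, (⌊a i / δ⌋ : K)) / ∑ i ∈ T, (⌊a i / δ⌋ : K)
      = (δ * ∑ i ∈ S, (⌊a i / δ⌋ : K)) / (δ * ∑ i ∈ T, (⌊a i / δ⌋ : K)) :=
        (mul_div_mul_left _ _ hδ.ne').symm
    _ ≤ (∑ i ∈ S, a i) / ((1 - η) * ∑ i ∈ T, a i) :=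
        div_le_div₀ hS (mul_sum_floor_div_le_sum hδ a S) (mul_pos (sub_pos.2 hη) hT)
          (one_sub_mul_sum_le_mul_sum_floor_div hδ hcard)
    _ = (1 - η)⁻¹ * ((∑ i ∈ S, a i) / ∑ i ∈ T, a i) := by
        rw [div_mul_eq_div_div_swap, inv_mul_eq_div]

end Rounding

theorem inv_one_sub_div_three_le {K : Type*} [Field K] [LinearOrder K] [IsStrictOrderedRing K]
    {ε : K} (hε0 : 0 ≤ ε) (hε1 : ε ≤ 1) : (1 - ε / 3)⁻¹ ≤ 1 + ε / 2 := by
  rw [inv_le_iff_one_le_mul₀ (by linarith)]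
  linarith [mul_nonneg hε0 (sub_nonneg.2 hε1)]

theorem apply_le_sum_of_le_max' {ι M : Type*} [LinearOrder ι] [AddCommMonoid M] [PartialOrder M]
    [IsOrderedAddMonoid M] {f : ι → M} {s S : Finset ι} {p : ι}
    (hf : MonotoneOn f s) (hnonneg : ∀ i ∈ S, 0 ≤ f i) (hp : p ∈ s) (hS : S ⊆ s)
    (hne : S.Nonempty) (hmax : p ≤ S.max' hne) : f p ≤ ∑ i ∈ S, f i :=
  (hf hp (hS (S.max'_mem hne)) hmax).trans (single_le_sum hnonneg (S.max'_mem hne))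

theorem card_le_of_subset_Icc_one {n : ℕ} {S : Finset ℕ} (hS : S ⊆ Icc 1 n) : #S ≤ n :=
  (card_le_card hS).trans_eq (Nat.card_Icc 1 n)

theorem ssrMR_le_mul {f g : ℕ → ℝ} {S₁ S₂ : Finset ℕ} {c : ℝ} (hc : 0 ≤ c)
    (h₁₂ : ssrR f S₁ S₂ ≤ c * ssrR g S₁ S₂) (h₂₁ : ssrR f S₂ S₁ ≤ c * ssrR g S₂ S₁) :
    ssrMR f S₁ S₂ ≤ c * ssrMR g S₁ S₂ := by
  unfold ssrMR
  rw [mul_max_of_nonneg _ _ hc]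
  exact max_le_max h₁₂ h₂₁

theorem ssrMR_floor_div_le {a : ℕ → ℝ} {δ η : ℝ} {S₁ S₂ : Finset ℕ} (hδ : 0 < δ) (hη : η < 1)
    (hpos₁ : 0 < ∑ i ∈ S₁, a i) (hpos₂ : 0 < ∑ i ∈ S₂, a i)
    (hcard₁ : #S₁ * δ ≤ η * ∑ i ∈ S₁, a i) (hcard₂ : #S₂ * δ ≤ η * ∑ i ∈ S₂, a i) :
    ssrMR (fun i => (⌊a i / δ⌋ : ℝ)) S₁ S₂ ≤ (1 - η)⁻¹ * ssrMR a S₁ S₂ :=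
  ssrMR_le_mul (inv_nonneg.2 (sub_nonneg.2 hη.le))
    (sum_floor_div_div_sum_floor_div_le hδ hη hpos₁.le hpos₂ hcard₂)
    (sum_floor_div_div_sum_floor_div_le hδ hη hpos₂.le hpos₁ hcard₁)

theorem ssrMR_nonneg {a : ℕ → ℝ} {S₁ S₂ : Finset ℕ} (h₁ : 0 ≤ ∑ i ∈ S₁, a i)
    (h₂ : 0 ≤ ∑ i ∈ S₂, a i) : 0 ≤ ssrMR a S₁ S₂ :=
  (div_nonneg h₁ h₂).trans (le_max_left _ _)

theorem stmt10_general (n : ℕ) (a : ℕ → ℝ) (ε : ℝ) (hε0 : 0 < ε) (hε1 : ε ≤ 1)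
    (w : ℝ) (hw : 0 < w) (δ : ℝ) (hδ : δ = ε * w / (3 * n))
    (a' : ℕ → ℤ) (ha' : ∀ i, a' i = ⌊a i / δ⌋) (S₁ S₂ : Finset ℕ)
    (hcard₁ : #S₁ ≤ n) (hcard₂ : #S₂ ≤ n)
    (hsum₁ : w ≤ ∑ i ∈ S₁, a i) (hsum₂ : w ≤ ∑ i ∈ S₂, a i) :
    ssrMR (fun i => (a' i : ℝ)) S₁ S₂ ≤ (1 + ε / 2) * ssrMR a S₁ S₂ := by
  obtain rfl : a' = fun i => ⌊a i / δ⌋ := funext ha'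
  have hpos₁ : 0 < ∑ i ∈ S₁, a i := hw.trans_le hsum₁
  have hpos₂ : 0 < ∑ i ∈ S₂, a i := hw.trans_le hsum₂
  have hn : 0 < n := (nonempty_of_sum_ne_zero hpos₁.ne').card_pos.trans_le hcard₁
  have hδ0 : 0 < δ := by rw [hδ]; positivity
  have hnδ : n * δ = ε / 3 * w := by rw [hδ]; field_simp
  have loss_le {S : Finset ℕ} (hcard : #S ≤ n) (hsum : w ≤ ∑ i ∈ S, a i) :
      #S * δ ≤ ε / 3 * ∑ i ∈ S, a i :=
    calc #S * δ ≤ n * δ := by gcongr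
      _ = ε / 3 * w := hnδ
      _ ≤ ε / 3 * ∑ i ∈ S, a i := by gcongr
  calc ssrMR (fun i => (⌊a i / δ⌋ : ℝ)) S₁ S₂ ≤ (1 - ε / 3)⁻¹ * ssrMR a S₁ S₂ :=
        ssrMR_floor_div_le hδ0 (by linarith) hpos₁ hpos₂ (loss_le hcard₁ hsum₁)
          (loss_le hcard₂ hsum₂)
    _ ≤ (1 + ε / 2) * ssrMR a S₁ S₂ :=
        mul_le_mul_of_nonneg_right (inv_one_sub_div_three_le hε0.le hε1)
          (ssrMR_nonneg hpos₁.le hpos₂.le)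

/-- with `δ = ε·a_p/(3n)` and scaled values `a'_i = ⌊a_i/δ⌋`, for nonempty
disjoint `S₁*, S₂* ⊆ {1,…,n}` with `max S₁* ≥ p` and `max S₂* ≥ p`:
`MR(S₁*, S₂*, A') ≤ (1 + ε/2)·MR(S₁*, S₂*, A)`. -/
theorem stmt10 (n : ℕ) (a : ℕ → ℕ)
    (hpos : ∀ i ∈ Finset.Icc 1 n, 0 < a i)
    (hmono : StrictMonoOn a (Finset.Icc 1 n))
    (ε : ℝ) (hε0 : 0 < ε) (hε1 : ε < 1)
    (p : ℕ) (hp1 : 1 ≤ p) (hpn : p < n)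
    (δ : ℝ) (hδ : δ = ε * (a p : ℝ) / (3 * n))
    (a' : ℕ → ℤ) (ha' : ∀ i, a' i = ⌊(a i : ℝ) / δ⌋)
    (S₁ S₂ : Finset ℕ)
    (hsub₁ : S₁ ⊆ Finset.Icc 1 n) (hsub₂ : S₂ ⊆ Finset.Icc 1 n)
    (hne₁ : S₁.Nonempty) (hne₂ : S₂.Nonempty) (hdisj : Disjoint S₁ S₂)
    (hmax₁ : p ≤ S₁.max' hne₁) (hmax₂ : p ≤ S₂.max' hne₂) :
    ssrMR (fun i => (a' i : ℝ)) S₁ S₂ ≤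
      (1 + ε / 2) * ssrMR (fun i => (a i : ℝ)) S₁ S₂ := by
  have hp : p ∈ Icc 1 n := mem_Icc.2 ⟨hp1, hpn.le⟩
  have hmono' : MonotoneOn (fun i => (a i : ℝ)) (Icc 1 n) :=
    Nat.mono_cast.comp_monotoneOn hmono.monotoneOn
  exact stmt10_general n _ ε hε0 hε1.le (a p) (Nat.cast_pos.2 (hpos p hp)) δ hδ a' ha' S₁ S₂
    (card_le_of_subset_Icc_one hsub₁) (card_le_of_subset_Icc_one hsub₂)
    (apply_le_sum_of_le_max' hmono' (fun _ _ => Nat.cast_nonneg _) hp hsub₁ hne₁ hmax₁)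
    (apply_le_sum_of_le_max' hmono' (fun _ _ => Nat.cast_nonneg _) hp hsub₂ hne₂ hmax₂)
end
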